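/- Harary's Balance Theorem (path form): A signed graph Σ is balanced if and only if for every pair of vertices v, w, all paths from v to w have the same sign (the sign of a path being the product of the signs of its edges). -/

import Mathlib

/-- The sign of a walk in a signed graph: the product of the signs of its edges. -/
def walkSign {V : Type*} (G : SimpleGraph V) (σ : Sym2 V → ℤˣ) {u v : V}
    (w : G.Walk u v) : ℤˣ :=
  (w.edges.map σ).prod

/-- A signed graph is balanced if every circle (cycle) is positive. -/
def sgBalanced {V : Type*} (G : SimpleGraph V) (σ : Sym2 V → ℤˣ) : Prop :=
  ∀ ⦃v : V⦄ (w : G.Walk v v), w.IsCycle → walkSign G σ w = 1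

/-!
A cycle is an edge `uv` together with a path from `v` to `u` avoiding that edge, so balance says
that every path between adjacent vertices has the sign of the edge joining them. Shortcutting a walk
to a path removes only closed walks made of such an edge and such a path, so in a balanced graph it
preserves the sign. A closed walk shortcuts to the trivial path and is therefore positive; apply
this to `p` followed by the reverse of `q`.
-/

section WalkSign

variable {V : Type*} {G : SimpleGraph V} (σ : Sym2 V → ℤˣ) {u v w : V}

@[simp]
theorem walkSign_nil : walkSign G σ (.nil : G.Walk u u) = 1 := by
  simp only [walkSign, SimpleGraph.Walk.edges_nil, List.map_nil, List.prod_nil]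

@[simp]
theorem walkSign_cons (h : G.Adj u v) (p : G.Walk v w) :
    walkSign G σ (.cons h p) = σ s(u, v) * walkSign G σ p := by
  simp only [walkSign, SimpleGraph.Walk.edges_cons, List.map_cons, List.prod_cons]

@[simp]
theorem walkSign_toWalk (h : G.Adj u v) : walkSign G σ h.toWalk = σ s(u, v) := by
  rw [SimpleGraph.Adj.toWalk, walkSign_cons, walkSign_nil, mul_one]

@[simp]
theorem walkSign_append (p : G.Walk u v) (q : G.Walk v w) :
    walkSign G σ (p.append q) = walkSign G σ p * walkSign G σ q := by
  simp only [walkSign, SimpleGraph.Walk.edges_append, List.map_append, List.prod_append]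

@[simp]
theorem walkSign_reverse (p : G.Walk u v) : walkSign G σ p.reverse = walkSign G σ p := by
  simp only [walkSign, SimpleGraph.Walk.edges_reverse, List.map_reverse,
    (List.reverse_perm _).prod_eq]

end WalkSign

section Balance

variable {V : Type*} {G : SimpleGraph V} {σ : Sym2 V → ℤˣ} {u v : V}

theorem sgBalanced_iff_forall_adj :
    sgBalanced G σ ↔ ∀ ⦃u v : V⦄, G.Adj u v → ∀ p : G.Walk u v, p.IsPath →
      walkSign G σ p = σ s(u, v) := by
  constructor
  · intro hb u v h p hp
    by_cases he : s(u, v) ∈ p.edges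
    · rw [hp.eq_adj_toWalk_of_mem_edges he, walkSign_toWalk]
    · have hcycle : (SimpleGraph.Walk.cons h.symm p).IsCycle :=
        (p.cons_isCycle_iff h.symm).2 ⟨hp, by rwa [Sym2.eq_swap]⟩
      have hpos : σ s(u, v) * walkSign G σ p = 1 := by
        rw [Sym2.eq_swap, ← walkSign_cons σ h.symm p, hb _ hcycle]
      rw [eq_inv_of_mul_eq_one_right hpos, Int.units_inv_eq_self]
  · intro hadj v c hc
    cases c with
    | nil => exact walkSign_nil σ
    | cons h p =>
      have hp : p.IsPath := ((p.cons_isCycle_iff h).1 hc).1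
      rw [walkSign_cons, hadj h.symm p hp, Sym2.eq_swap, Int.units_mul_self]

theorem sgBalanced.walkSign_bypass [DecidableEq V] (hb : sgBalanced G σ) (p : G.Walk u v) :
    walkSign G σ p.bypass = walkSign G σ p := by
  induction p with
  | nil => rfl
  | @cons u x v h p ih =>
    rw [walkSign_cons, ← ih, SimpleGraph.Walk.bypass]
    split_ifs with hu
    · have htake : walkSign G σ (p.bypass.takeUntil u hu) = σ s(u, x) := by
        rw [Sym2.eq_swap]
        exact sgBalanced_iff_forall_adj.1 hb h.symm _ (p.bypass_isPath.takeUntil hu)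
      calc walkSign G σ (p.bypass.dropUntil u hu)
          = σ s(u, x) * (walkSign G σ (p.bypass.takeUntil u hu) *
              walkSign G σ (p.bypass.dropUntil u hu)) := by
            rw [htake, ← mul_assoc, Int.units_mul_self, one_mul]
        _ = σ s(u, x) * walkSign G σ p.bypass := by
            rw [← walkSign_append, SimpleGraph.Walk.take_spec]
    · exact walkSign_cons σ h p.bypass

theorem sgBalanced.walkSign_eq_one (hb : sgBalanced G σ) (c : G.Walk v v) :
    walkSign G σ c = 1 := by
  classical
  have hnil : c.bypass = .nil := (SimpleGraph.Walk.isPath_iff_nil.1 c.bypass_isPath).eq_nil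
  rw [← hb.walkSign_bypass, hnil, walkSign_nil]

theorem sgBalanced.walkSign_eq (hb : sgBalanced G σ) (p q : G.Walk u v) :
    walkSign G σ p = walkSign G σ q := by
  have hclosed : walkSign G σ p * walkSign G σ q = 1 := by
    rw [← walkSign_reverse σ q, ← walkSign_append, hb.walkSign_eq_one]
  rw [eq_inv_of_mul_eq_one_left hclosed, Int.units_inv_eq_self]

end Balance

theorem harary_balance_paths_general {V : Type*} (G : SimpleGraph V) (σ : Sym2 V → ℤˣ) :
    sgBalanced G σ ↔
      ∀ (v w : V) (p q : G.Walk v w), p.IsPath → q.IsPath →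
        walkSign G σ p = walkSign G σ q := by
  refine ⟨fun hb _ _ p q _ _ => hb.walkSign_eq p q, fun hpaths => ?_⟩
  refine sgBalanced_iff_forall_adj.2 fun u v h p hp => ?_
  rw [hpaths u v p h.toWalk hp h.isPath_toWalk, walkSign_toWalk]

/-- Harary's Balance Theorem (path form): a signed graph is balanced iff for every pair
of vertices `v, w`, all paths from `v` to `w` have the same sign. -/
theorem harary_balance_paths {V : Type*} [Fintype V]
    (G : SimpleGraph V) (σ : Sym2 V → ℤˣ) :
    sgBalanced G σ ↔
      ∀ (v w : V) (p q : G.Walk v w), p.IsPath → q.IsPath →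
        walkSign G σ p = walkSign G σ q :=
  harary_balance_paths_general G σ
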